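/- Let q be an odd integer ≥ 3 with ω(q) ≥ 2 (q has at least two distinct prime factors), and let r be the multiplicative order of 2 modulo q. Then E'(q) ≠ ∅, and there exists a coherent set 𝒞 of semi-bad classes modulo q with |𝒞| = r. -/

import Mathlib

/-!
The set `E(q)` is the cyclic subgroup generated by `2`, so it contains at most one element of
order two (`eq_of_sq_eq_one_of_mem_badE`). When `q` has two distinct odd prime factors, the Chinese
remainder theorem yields a square root `u` of `1` other than `±1` (`exists_sq_eq_one`). Hence one of
`u`, `-1` lies outside `E(q)`; calling it `w`, the coset `w E(q)` consists of `r` semi-bad classes,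
and the product of any two of them lies in `w² E(q) = E(q)`.
-/

/-- The set `E(q)` of bad classes: the powers `2^i`, `0 ≤ i ≤ r - 1`, in `ℤ/qℤ`,
where `r` is the multiplicative order of `2` modulo `q`. -/
def badE (q : ℕ) : Set (ZMod q) := {x | ∃ i < orderOf (2 : ZMod q), x = 2 ^ i}

/-- A class of `(ℤ/qℤ)*` is semi-bad if it does not belong to `E(q)` but its square does. -/
def SemiBad (q : ℕ) (x : ZMod q) : Prop := IsUnit x ∧ x ∉ badE q ∧ x ^ 2 ∈ badE q

/-- The set `E'(q)` of semi-bad classes. -/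
def semiBadE (q : ℕ) : Set (ZMod q) := {x | SemiBad q x}

/-- A set of semi-bad classes is coherent if it is nonempty and the product of any two of
its elements is a bad class. -/
def Coherent (q : ℕ) (C : Set (ZMod q)) : Prop :=
  C.Nonempty ∧ (∀ x ∈ C, SemiBad q x) ∧ ∀ x ∈ C, ∀ y ∈ C, x * y ∈ badE q

/-- `2` has finite order modulo an odd `q`, so that `orderOf 2` is not the junk value `0`. -/
lemma isOfFinOrder_two {q : ℕ} (hodd : Odd q) : IsOfFinOrder (2 : ZMod q) := by
  have hc : Nat.Coprime 2 q := Nat.coprime_two_left.mpr hodd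
  rw [isOfFinOrder_iff_pow_eq_one]
  refine ⟨q.totient, Nat.totient_pos.mpr hodd.pos, ?_⟩
  have h := congrArg Units.val (ZMod.pow_totient (ZMod.unitOfCoprime 2 hc))
  rwa [Units.val_pow_eq_pow_val, ZMod.coe_unitOfCoprime, Units.val_one, Nat.cast_ofNat] at h

lemma mem_badE_iff {q : ℕ} (hodd : Odd q) {x : ZMod q} :
    x ∈ badE q ↔ ∃ n : ℕ, x = 2 ^ n := by
  constructor
  · rintro ⟨i, -, h⟩
    exact ⟨i, h⟩
  · rintro ⟨n, rfl⟩
    exact ⟨n % orderOf (2 : ZMod q), Nat.mod_lt _ (isOfFinOrder_two hodd).orderOf_pos,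
      (pow_mod_orderOf _ _).symm⟩

/-- A cyclic group has at most one element of order two: such an element of `E(q)` must be
`2 ^ (r / 2)`. -/
lemma eq_of_sq_eq_one_of_mem_badE {q : ℕ} {x y : ZMod q} (hx : x ∈ badE q) (hy : y ∈ badE q)
    (hx2 : x ^ 2 = 1) (hy2 : y ^ 2 = 1) (hx1 : x ≠ 1) (hy1 : y ≠ 1) : x = y := by
  have key : ∀ i < orderOf (2 : ZMod q), ((2 : ZMod q) ^ i) ^ 2 = 1 → (2 : ZMod q) ^ i ≠ 1 →
      i * 2 = orderOf (2 : ZMod q) := by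
    intro i hi h2 h1
    have hi0 : i ≠ 0 := by
      rintro rfl
      exact h1 (pow_zero _)
    rw [← pow_mul] at h2
    obtain ⟨k, hk⟩ := orderOf_dvd_of_pow_eq_one h2
    have hk1 : k = 1 := by
      have hk0 : k ≠ 0 := by
        rintro rfl
        omega
      have hk2 : k < 2 := by
        by_contra! h
        nlinarith
      omega
    rw [hk, hk1, mul_one]
  obtain ⟨i, hi, rfl⟩ := hx
  obtain ⟨j, hj, rfl⟩ := hy
  have h1 := key i hi hx2 hx1
  have h2 := key j hj hy2 hy1
  rw [show i = j by omega]

/-- The square root of `1` congruent to `1` modulo `a` and to `-1` modulo `b`. -/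
lemma exists_sq_eq_one {a b : ℕ} (hab : a.Coprime b) (ha : 2 < a) (hb : 2 < b) :
    ∃ u : ZMod (a * b), u ^ 2 = 1 ∧ u ≠ 1 ∧ u ≠ -1 := by
  have : Fact (2 < a) := ⟨ha⟩
  have : Fact (2 < b) := ⟨hb⟩
  let e := ZMod.chineseRemainder hab
  refine ⟨e.symm (1, -1), ?_, ?_, ?_⟩
  · apply e.injective
    rw [map_pow, e.apply_symm_apply, map_one]
    ext <;> simp
  · intro h
    have h' := congrArg (fun z => (e z).2) h
    simp only [e.apply_symm_apply, map_one, Prod.snd_one] at h'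
    exact ZMod.neg_one_ne_one h'
  · intro h
    have h' := congrArg (fun z => (e z).1) h
    simp only [e.apply_symm_apply, map_neg, map_one, Prod.fst_neg, Prod.fst_one] at h'
    exact ZMod.neg_one_ne_one h'.symm

lemma exists_coprime_factors {q : ℕ} (hodd : Odd q) (homega : 2 ≤ q.primeFactors.card) :
    ∃ a b : ℕ, a.Coprime b ∧ 2 < a ∧ 2 < b ∧ q = a * b := by
  have hq0 : q ≠ 0 := hodd.pos.ne'
  obtain ⟨p, hp, s, hs, hps⟩ := Finset.one_lt_card.mp homega
  have hpp := Nat.prime_of_mem_primeFactors hp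
  have hsp := Nat.prime_of_mem_primeFactors hs
  have hpq := Nat.dvd_of_mem_primeFactors hp
  have hsq := Nat.dvd_of_mem_primeFactors hs
  have hmul := Nat.ordProj_mul_ordCompl_eq_self q p
  set a := p ^ q.factorization p with ha
  set b := q / a with hb
  have hcop : a.Coprime b := (Nat.coprime_ordCompl hpp hq0).pow_left _
  have hpa : p ∣ a := dvd_pow_self p (hpp.factorization_pos_of_dvd hq0 hpq).ne'
  have hsb : s ∣ b := by
    refine Nat.Coprime.dvd_of_dvd_mul_left (m := a) ?_ (hmul.symm ▸ hsq)
    exact ((Nat.coprime_primes hsp hpp).mpr (Ne.symm hps)).pow_right _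
  rw [← hmul, Nat.odd_mul] at hodd
  have two_lt : ∀ {n t : ℕ}, Odd n → t.Prime → t ∣ n → 2 < n := by
    intro n t hn ht htn
    have h1 := Nat.le_of_dvd hn.pos htn
    have h2 := ht.two_le
    obtain ⟨k, rfl⟩ := hn
    omega
  exact ⟨a, b, hcop, two_lt hodd.1 hpp hpa, two_lt hodd.2 hsp hsb, hmul.symm⟩

lemma exists_sq_eq_one_notMem_badE {q : ℕ} (hodd : Odd q) (homega : 2 ≤ q.primeFactors.card) :
    ∃ w : ZMod q, w ^ 2 = 1 ∧ w ∉ badE q := by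
  obtain ⟨a, b, hab, ha, hb, rfl⟩ := exists_coprime_factors hodd homega
  obtain ⟨u, hu2, hu1, hu1'⟩ := exists_sq_eq_one hab ha hb
  have : Fact (2 < a * b) := ⟨by nlinarith⟩
  by_cases hu : u ∈ badE (a * b)
  · refine ⟨-1, by simp, fun hn => hu1' ?_⟩
    exact eq_of_sq_eq_one_of_mem_badE hu hn hu2 (by simp) hu1 ZMod.neg_one_ne_one
  · exact ⟨u, hu2, hu⟩

/-- If `q` is odd with at least two distinct prime factors, then `E'(q) ≠ ∅` and there is
a coherent set `𝒞` of semi-bad classes with `|𝒞| = r`, where `r` is the multiplicative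
order of `2` modulo `q`. -/
theorem stmt9 (q : ℕ) (hq : 3 ≤ q) (hodd : Odd q)
    (homega : 2 ≤ q.primeFactors.card) :
    (semiBadE q).Nonempty ∧
      ∃ C : Set (ZMod q), Coherent q C ∧ C.ncard = orderOf (2 : ZMod q) := by
  obtain ⟨w, hw2, hw⟩ := exists_sq_eq_one_notMem_badE hodd homega
  have hfin := isOfFinOrder_two hodd
  have hwu : IsUnit w := IsUnit.of_pow_eq_one hw2 two_ne_zero
  have hsemi : ∀ i : ℕ, SemiBad q (w * 2 ^ i) := by
    intro i
    refine ⟨hwu.mul (hfin.isUnit.pow i), fun h => hw ?_, ?_⟩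
    · obtain ⟨n, hn⟩ := (mem_badE_iff hodd).mp h
      -- The exponent `i * (r - 1)` inverts `2 ^ i`, since `i + i * (r - 1) = r * i`.
      refine (mem_badE_iff hodd).mpr ⟨n + i * (orderOf (2 : ZMod q) - 1), ?_⟩
      have hr := hfin.orderOf_pos
      have hexp : i + i * (orderOf (2 : ZMod q) - 1) = orderOf (2 : ZMod q) * i := by
        obtain ⟨k, hk⟩ := Nat.exists_eq_succ_of_ne_zero hr.ne'
        rw [hk, Nat.succ_sub_one, Nat.succ_eq_add_one]
        ring
      rw [pow_add, ← hn, mul_assoc, ← pow_add, hexp, pow_mul, pow_orderOf_eq_one, one_pow, mul_one]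
    · refine (mem_badE_iff hodd).mpr ⟨i * 2, ?_⟩
      rw [mul_pow, hw2, one_mul, pow_mul]
  refine ⟨⟨w * 2 ^ 0, hsemi 0⟩,
    (fun i : ℕ => w * 2 ^ i) '' Set.Iio (orderOf (2 : ZMod q)), ⟨?_, ?_, ?_⟩, ?_⟩
  · exact ⟨_, 0, hfin.orderOf_pos, rfl⟩
  · rintro _ ⟨i, -, rfl⟩
    exact hsemi i
  · rintro _ ⟨i, -, rfl⟩ _ ⟨j, -, rfl⟩
    refine (mem_badE_iff hodd).mpr ⟨i + j, ?_⟩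
    calc w * 2 ^ i * (w * 2 ^ j) = w ^ 2 * 2 ^ (i + j) := by ring
      _ = 2 ^ (i + j) := by rw [hw2, one_mul]
  · rw [Set.InjOn.ncard_image]
    · simp [Set.ncard_eq_toFinset_card']
    · intro i hi j hj hij
      exact pow_injOn_Iio_orderOf hi hj (hwu.mul_left_cancel hij)
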